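/- arXiv:2311.04136 — 3 statements merged into one kernel-verified Lean document; each statement's English description precedes it below -/
import Mathlib

section
/- Let S = K[x_1,…,x_n] be a standard graded polynomial ring over a field K of prime characteristic p, and let I ⊂ S be a proper nonzero monomial ideal. Then for all q = p^e > 1, v(I^{[q]}) ≥ q·v(I) + (q−1)·height(I). -/
open MvPolynomial

attribute [local instance] MvPolynomial.gradedAlgebra

noncomputable section

variable {K : Type*} [Field K] {n : ℕ}

/-- The `q`-th Frobenius power `I^{[q]}` of an ideal. -/
def frobPow (I : Ideal (MvPolynomial (Fin n) K)) (q : ℕ) : Ideal (MvPolynomial (Fin n) K) :=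
  Ideal.span ((fun a => a ^ q) '' (I : Set (MvPolynomial (Fin n) K)))

/-- The associated primes of `S/I`. -/
def Ass (I : Ideal (MvPolynomial (Fin n) K)) : Set (Ideal (MvPolynomial (Fin n) K)) :=
  associatedPrimes (MvPolynomial (Fin n) K) (MvPolynomial (Fin n) K ⧸ I)

/-- The v-number of a graded ideal. -/
def vnum (I : Ideal (MvPolynomial (Fin n) K)) : ℕ :=
  sInf {d : ℕ | ∃ f : MvPolynomial (Fin n) K, f.IsHomogeneous d ∧
    ∃ 𝔭 ∈ Ass I, I.colon (Ideal.span {f}) = 𝔭}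

/-- The local v-number `v_𝔭(I)`. -/
def vnumLocal (I 𝔭 : Ideal (MvPolynomial (Fin n) K)) : ℕ :=
  sInf {d : ℕ | ∃ f : MvPolynomial (Fin n) K, f.IsHomogeneous d ∧
    I.colon (Ideal.span {f}) = 𝔭}

/-- The invariant `α_q(I)`. -/
def alphaq (I : Ideal (MvPolynomial (Fin n) K)) (q : ℕ) : ℕ :=
  sInf {d : ℕ | ∃ f : MvPolynomial (Fin n) K, f.IsHomogeneous d ∧
    f ∈ (frobPow I q).colon I ∧ f ∉ frobPow I q}

/-- The height of an ideal: the minimal height of an associated prime. -/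
def heightI (I : Ideal (MvPolynomial (Fin n) K)) : ℕ :=
  sInf {h : ℕ | ∃ 𝔭 ∈ Ass I, ∃ h𝔭 : 𝔭.IsPrime,
    Order.height (⟨𝔭, h𝔭⟩ : PrimeSpectrum (MvPolynomial (Fin n) K)) = (h : ℕ∞)}

/-- The big height of an ideal: the maximal height of an associated prime. -/
def bightI (I : Ideal (MvPolynomial (Fin n) K)) : ℕ :=
  sSup {h : ℕ | ∃ 𝔭 ∈ Ass I, ∃ h𝔭 : 𝔭.IsPrime,
    Order.height (⟨𝔭, h𝔭⟩ : PrimeSpectrum (MvPolynomial (Fin n) K)) = (h : ℕ∞)}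

/-- A graded (homogeneous) ideal with respect to the standard grading. -/
def IsGraded (I : Ideal (MvPolynomial (Fin n) K)) : Prop :=
  Ideal.IsHomogeneous (homogeneousSubmodule (Fin n) K) I

/-- A monomial ideal. -/
def IsMonomialIdeal (I : Ideal (MvPolynomial (Fin n) K)) : Prop :=
  ∃ s : Set (Fin n →₀ ℕ), I = Ideal.span ((fun a => monomial a (1 : K)) '' s)

/-- `J` contains a polynomial iff it contains all its monomials. -/
def MonClosed (J : Ideal (MvPolynomial (Fin n) K)) : Prop :=
  ∀ g ∈ J, ∀ c ∈ g.support, monomial c (1 : K) ∈ J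

lemma mem_of_support {J : Ideal (MvPolynomial (Fin n) K)} {g : MvPolynomial (Fin n) K}
    (h : ∀ c ∈ g.support, monomial c (1 : K) ∈ J) : g ∈ J := by
  rw [g.as_sum]
  refine Ideal.sum_mem _ fun c hc => ?_
  have : monomial c (coeff c g) = C (coeff c g) * monomial c (1 : K) := by
    rw [C_mul_monomial, mul_one]
  rw [this]
  exact J.mul_mem_left _ (h c hc)

lemma isMonomialIdeal_monClosed {J : Ideal (MvPolynomial (Fin n) K)} (h : IsMonomialIdeal J) :
    MonClosed J := by
  obtain ⟨s, rfl⟩ := h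
  intro g hg c hc
  rw [mem_ideal_span_monomial_image] at hg ⊢
  intro xi hxi
  have : xi = c := by
    have := support_monomial_subset hxi
    simpa using this
  subst this
  exact hg _ hc

lemma support_sub_coeff (f : MvPolynomial (Fin n) K) (c : Fin n →₀ ℕ) :
    (f - monomial c (coeff c f)).support = f.support.erase c := by
  classical
  ext d
  simp only [mem_support_iff, coeff_sub, coeff_monomial, Finset.mem_erase]
  by_cases h : c = d
  · subst h; simp
  · simp [h, Ne.symm h]

lemma prime_monClosed {J P : Ideal (MvPolynomial (Fin n) K)} (hJ : MonClosed J) (hP : P.IsPrime)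
    (k : ℕ) : ∀ (f : MvPolynomial (Fin n) K) (w : Fin n →₀ ℕ), f.support.card = k →
      (∀ g, g ∈ P ↔ g * (monomial w 1 * f) ∈ J) → MonClosed P := by
  classical
  let m : MonomialOrder (Fin n) := MonomialOrder.lex
  induction k using Nat.strong_induction_on with
  | _ k ih =>
  intro f w hk hf
  by_cases H : ∃ g ∈ P, g ≠ 0 ∧ monomial (m.degree g) (1 : K) ∉ P
  · obtain ⟨g, hgP, hg0, hu⟩ := H
    have hf0 : f ≠ 0 := by
      rintro rfl
      exact hP.ne_top ((Ideal.eq_top_iff_one _).2 ((hf 1).2 (by simp)))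
    have hw0 : (monomial w (1 : K)) ≠ 0 := by simp
    have hdw : m.degree (monomial w (1 : K)) = w := by
      classical
      rw [m.degree_monomial]; simp
    have hdeg : m.degree (g * (monomial w 1 * f)) = m.degree g + (w + m.degree f) := by
      rw [m.degree_mul hg0 (mul_ne_zero hw0 hf0), m.degree_mul hw0 hf0, hdw]
    have hmem : monomial (m.degree g + (w + m.degree f)) (1 : K) ∈ J := by
      refine hJ _ ((hf g).1 hgP) _ ?_
      rw [← hdeg, mem_support_iff]
      exact m.coeff_degree_ne_zero_iff.2 (mul_ne_zero hg0 (mul_ne_zero hw0 hf0))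
    refine ih _ ?_ (f - monomial (m.degree f) (coeff (m.degree f) f)) (m.degree g + w) rfl ?_
    · rw [support_sub_coeff, ← hk]
      refine Finset.card_erase_lt_of_mem ?_
      rw [mem_support_iff]
      exact m.coeff_degree_ne_zero_iff.2 hf0
    · intro h
      have h1 : h ∈ P ↔ h * monomial (m.degree g) (1 : K) ∈ P :=
        ⟨fun hh => P.mul_mem_right _ hh, fun hh => (hP.mem_or_mem hh).resolve_right hu⟩
      rw [h1, hf]
      have e : h * monomial (m.degree g) 1 * (monomial w 1 * f) =
          h * (monomial (m.degree g + w) 1 * (f - monomial (m.degree f) (coeff (m.degree f) f)))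
          + h * C (coeff (m.degree f) f) * monomial (m.degree g + (w + m.degree f)) (1 : K) := by
        have e1 : monomial (m.degree g + (w + m.degree f)) (1 : K) =
          monomial (m.degree g) 1 * (monomial w 1 * monomial (m.degree f) 1) := by
          simp [monomial_mul]
        have e2 : monomial (m.degree f) (coeff (m.degree f) f) =
          C (coeff (m.degree f) f) * monomial (m.degree f) (1 : K) := by
          rw [C_mul_monomial, mul_one]
        have e3 : monomial (m.degree g + w) (1 : K) = monomial (m.degree g) 1 * monomial w 1 := by
          simp [monomial_mul]
        rw [e1, e2, e3]
        ring
      rw [e]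
      exact J.add_mem_iff_left (J.mul_mem_left _ hmem)
  · push Not at H
    have : ∀ k, ∀ g ∈ P, g.support.card = k → ∀ c ∈ g.support, monomial c (1 : K) ∈ P := by
      intro k
      induction k with
      | zero => 
        intro g _ h0 c hc
        rw [Finset.card_eq_zero] at h0
        simp [h0] at hc
      | succ k ihk =>
        intro g hg hcard c hc
        have hg0 : g ≠ 0 := by rintro rfl; simp at hcard
        have hl := H g hg hg0
        by_cases hcd : c = m.degree g
        · rw [hcd]; exact hl
        · refine ihk (g - monomial (m.degree g) (coeff (m.degree g) g)) ?_ ?_ c ?_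
          · refine P.sub_mem hg ?_
            have e2 : monomial (m.degree g) (coeff (m.degree g) g) =
              C (coeff (m.degree g) g) * monomial (m.degree g) (1 : K) := by
              rw [C_mul_monomial, mul_one]
            rw [e2]; exact P.mul_mem_left _ hl
          · rw [support_sub_coeff, Finset.card_erase_of_mem, hcard]; rfl
            rw [mem_support_iff]
            exact m.coeff_degree_ne_zero_iff.2 hg0
          · rw [support_sub_coeff]; exact Finset.mem_erase.2 ⟨hcd, hc⟩
    exact fun g hg => this _ g hg rfl

/-- A prime colon of a monomial ideal by `f` is the colon by a monomial of `f`. -/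
lemma exists_monomial_colon {J P : Ideal (MvPolynomial (Fin n) K)} (hJ : MonClosed J)
    (hP : P.IsPrime) (f : MvPolynomial (Fin n) K) (hf : J.colon (Ideal.span {f}) = P) :
    MonClosed P ∧ ∃ a ∈ f.support, ∀ g, g ∈ P ↔ g * monomial a 1 ∈ J := by
  classical
  have hf' : ∀ g, g ∈ P ↔ g * f ∈ J := by
    intro g; rw [← hf, Ideal.mem_colon_span_singleton]
  have hPm : MonClosed P := prime_monClosed hJ hP _ f 0 rfl (by simpa using hf')
  refine ⟨hPm, ?_⟩
  have h1 : ∀ a ∈ f.support, ∀ g ∈ P, g * monomial a 1 ∈ J := by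
    intro a ha g hg
    have : g ∈ J.colon (Ideal.span {monomial a (1 : K)}) := by
      refine mem_of_support fun c hc => ?_
      rw [Ideal.mem_colon_span_singleton, monomial_mul, one_mul]
      refine hJ _ ((hf' _).1 (hPm g hg c hc)) _ ?_
      rw [mem_support_iff, coeff_monomial_mul]
      simpa using ha
    rwa [Ideal.mem_colon_span_singleton] at this
  by_contra hcon
  push Not at hcon
  have h2 : ∀ a ∈ f.support, ∃ g, g ∉ P ∧ g * monomial a 1 ∈ J := by
    intro a ha
    obtain ⟨g, hg⟩ := hcon a ha
    rcases hg with hg | hg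
    · exact absurd (h1 a ha g hg.1) hg.2
    · exact ⟨g, hg⟩
  choose! G hG using h2
  have hprod : (∏ a ∈ f.support, G a) ∈ P := by
    rw [hf']
    conv => arg 2; arg 2; rw [f.as_sum]
    rw [Finset.mul_sum]
    refine Ideal.sum_mem _ fun a ha => ?_
    rw [← Finset.mul_prod_erase _ _ ha]
    have e2 : monomial a (coeff a f) = C (coeff a f) * monomial a (1 : K) := by
      rw [C_mul_monomial, mul_one]
    rw [e2]
    have : G a * ∏ x ∈ f.support.erase a, G x = (∏ x ∈ f.support.erase a, G x) * G a := mul_comm _ _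
    rw [this]
    have := J.mul_mem_left ((∏ x ∈ f.support.erase a, G x) * C (coeff a f)) (hG a ha).2
    convert this using 1
    ring
  obtain ⟨a, ha, h⟩ := (hP.prod_mem_iff).1 hprod
  exact (hG a ha).1 h

lemma mem_Ass_iff (J P : Ideal (MvPolynomial (Fin n) K)) :
    P ∈ Ass J ↔ P.IsPrime ∧ ∃ f : MvPolynomial (Fin n) K, J.colon (Ideal.span {f}) = P := by
  unfold Ass
  rw [AssociatedPrimes.mem_iff, isAssociatedPrime_iff]
  refine and_congr_right fun _ => ?_
  have key : ∀ f : MvPolynomial (Fin n) K, (⊥ : Submodule (MvPolynomial (Fin n) K)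
      (MvPolynomial (Fin n) K ⧸ J)).colon {Ideal.Quotient.mk J f} = J.colon (Ideal.span {f}) := by
    intro f
    ext g
    rw [Submodule.mem_colon_singleton, Ideal.mem_colon_span_singleton, Submodule.mem_bot,
      ← Ideal.Quotient.eq_zero_iff_mem, map_mul]
    rfl
  constructor
  · rintro ⟨x, hx⟩
    obtain ⟨f, rfl⟩ := Ideal.Quotient.mk_surjective x
    exact ⟨f, by rw [← key, hx]⟩
  · rintro ⟨f, hf⟩
    exact ⟨Ideal.Quotient.mk J f, by rw [key, hf]⟩

lemma frobPow_eq (p : ℕ) (hp : p.Prime) [CharP K p] (e : ℕ) (s : Set (Fin n →₀ ℕ)) :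
    frobPow (Ideal.span ((fun a => monomial a (1 : K)) '' s)) (p ^ e) =
      Ideal.span ((fun a => monomial a (1 : K)) '' ((fun a => (p ^ e) • a) '' s)) := by
  have : Fact p.Prime := ⟨hp⟩
  have h1 : ∀ I : Ideal (MvPolynomial (Fin n) K),
      frobPow I (p ^ e) = I.map (iterateFrobenius (MvPolynomial (Fin n) K) p e) := by
    intro I
    rfl
  rw [h1, Ideal.map_span]
  congr 1
  rw [Set.image_image, Set.image_image]
  refine Set.image_congr fun a _ => ?_
  rw [iterateFrobenius_def, monomial_pow, one_pow]

lemma heightI_le {I P : Ideal (MvPolynomial (Fin n) K)} (hP : P ∈ Ass I) (hPm : MonClosed P)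
    (A : Finset (Fin n)) (hA : ∀ i, i ∈ A ↔ X i ∈ P) : heightI I ≤ A.card := by
  classical
  have hPp : P.IsPrime := ((mem_Ass_iff _ _).1 hP).1
  have hspan : P = Ideal.span ((A.image (X : Fin n → MvPolynomial (Fin n) K) :
      Finset (MvPolynomial (Fin n) K)) : Set (MvPolynomial (Fin n) K)) := by
    apply le_antisymm
    · intro g hg
      refine mem_of_support fun c hc => ?_
      have := hPm g hg c hc
      rw [monomial_eq, C_1, one_mul, Finsupp.prod, hPp.prod_mem_iff] at this
      obtain ⟨i, hi, hi'⟩ := this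
      have hXi := hPp.mem_of_pow_mem _ hi'
      rw [monomial_eq, C_1, one_mul, Finsupp.prod]
      refine Ideal.mem_of_dvd _ (Finset.dvd_prod_of_mem _ hi) ?_
      refine Ideal.pow_mem_of_mem _ (Ideal.subset_span ?_) _
        (Nat.pos_of_ne_zero (Finsupp.mem_support_iff.1 hi))
      exact Finset.mem_coe.2 (Finset.mem_image_of_mem _ ((hA i).2 hXi))
    · rw [Ideal.span_le]
      intro x hx
      simp only [Finset.coe_image, Set.mem_image, Finset.mem_coe] at hx
      obtain ⟨i, hi, rfl⟩ := hx
      exact (hA i).1 hi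
  have hle : P.height ≤ (A.card : ℕ∞) := by
    refine le_trans (Ideal.height_le_card_of_mem_minimalPrimes_span_finset
      (s := A.image (X : Fin n → MvPolynomial (Fin n) K)) ?_) ?_
    · rw [← hspan, Ideal.minimalPrimes_eq_subsingleton_self]; rfl
    · exact_mod_cast Finset.card_image_le
  obtain ⟨h, hh⟩ := ENat.ne_top_iff_exists.1 (ne_top_of_le_ne_top (ENat.natCast_ne_top _) hle)
  have hh' : h ≤ A.card := by rw [← hh] at hle; exact_mod_cast hle
  refine le_trans (Nat.sInf_le ⟨P, hP, hPp, ?_⟩) hh'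
  rw [hh]
  exact (PrimeSpectrum.height_eq_orderHeight ⟨P, hPp⟩).symm

theorem stmt10 {K : Type*} [Field K] {n : ℕ} (p : ℕ) (hp : p.Prime) [CharP K p]
    (I : Ideal (MvPolynomial (Fin n) K)) (hmon : IsMonomialIdeal I) (htop : I ≠ ⊤) (hbot : I ≠ ⊥)
    (q : ℕ) (hq : ∃ e : ℕ, q = p ^ e) (hq1 : 1 < q) :
    q * vnum I + (q - 1) * heightI I ≤ vnum (frobPow I q) := by
  classical
  obtain ⟨e, rfl⟩ := hq
  obtain ⟨s, rfl⟩ := hmon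
  rw [vnum.eq_1 (frobPow _ _)]
  rw [frobPow_eq p hp e s]
  set q := p ^ e with hqdef
  set I := Ideal.span ((fun a => monomial a (1 : K)) '' s) with hI
  set J := Ideal.span ((fun a => monomial a (1 : K)) '' ((fun a => q • a) '' s)) with hJ
  have hq0 : 0 < q := by omega
  have hJm : MonClosed J := isMonomialIdeal_monClosed ⟨_, rfl⟩
  have hImem : ∀ c, monomial c (1 : K) ∈ I ↔ ∃ t ∈ s, t ≤ c := by
    intro c
    rw [hI, mem_ideal_span_monomial_image, support_monomial, if_neg one_ne_zero]
    simp
  have hJmem : ∀ c, monomial c (1 : K) ∈ J ↔ ∃ t ∈ s, q • t ≤ c := by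
    intro c
    rw [hJ, mem_ideal_span_monomial_image, support_monomial, if_neg one_ne_zero]
    simp
  have hJtop : J ≠ ⊤ := by
    intro h
    apply htop
    have h1 : monomial 0 (1 : K) ∈ J := by rw [h]; trivial
    obtain ⟨t, ht, hle⟩ := (hJmem 0).1 h1
    rw [Ideal.eq_top_iff_one]
    refine (hImem 0).2 ⟨t, ht, fun i => ?_⟩
    have := hle i
    simp at this
    simp; omega
  have hne : {d : ℕ | ∃ f : MvPolynomial (Fin n) K, f.IsHomogeneous d ∧
      ∃ 𝔭 ∈ Ass J, J.colon (Ideal.span {f}) = 𝔭}.Nonempty := by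
    have : Nontrivial (MvPolynomial (Fin n) K ⧸ J) := Ideal.Quotient.nontrivial_iff.2 hJtop
    obtain ⟨P, hP⟩ := associatedPrimes.nonempty (MvPolynomial (Fin n) K)
      (MvPolynomial (Fin n) K ⧸ J)
    obtain ⟨hPp, f, hf⟩ := (mem_Ass_iff J P).1 hP
    obtain ⟨_, a, _, ha⟩ := exists_monomial_colon hJm hPp f hf
    refine ⟨_, monomial a 1, isHomogeneous_monomial _ rfl, P, hP, ?_⟩
    ext g
    rw [Ideal.mem_colon_span_singleton, ha]
  obtain ⟨f, hfd, P, hP, hf⟩ := Nat.sInf_mem hne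
  generalize sInf {d : ℕ | ∃ f : MvPolynomial (Fin n) K, f.IsHomogeneous d ∧
      ∃ 𝔭 ∈ Ass J, J.colon (Ideal.span {f}) = 𝔭} = d at hfd ⊢
  have hPp := ((mem_Ass_iff J P).1 hP).1
  obtain ⟨hPm, a, haf, ha⟩ := exists_monomial_colon hJm hPp f hf
  have had : ∑ i, a i = d := by
    have := hfd (mem_support_iff.1 haf)
    rw [← this, ← Finsupp.degree_eq_sum]
    exact DFunLike.congr_fun (Finsupp.degree_eq_weight_one (R := ℕ)) a
  let b : Fin n →₀ ℕ := Finsupp.equivFunOnFinite.symm fun i => a i / q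
  have hb : ∀ i, b i = a i / q := fun i => rfl
  -- membership in `J` only depends on the quotients
  have hJI : ∀ c : Fin n →₀ ℕ, ∀ b' : Fin n →₀ ℕ, (∀ i, b' i = c i / q) →
      (monomial c (1 : K) ∈ J ↔ monomial b' (1 : K) ∈ I) := by
    intro c b' hb'
    rw [hJmem, hImem]
    refine exists_congr fun t => and_congr_right fun _ => ?_
    refine forall_congr' fun i => ?_
    rw [hb', Nat.le_div_iff_mul_le hq0, mul_comm]
    rfl
  have haJ : monomial a (1 : K) ∉ J := fun h =>
    hPp.ne_top ((Ideal.eq_top_iff_one _).2 ((ha 1).2 (by rwa [one_mul])))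
  have hX : ∀ i, X i ∈ P → a i % q = q - 1 ∧ monomial (Finsupp.single i 1 + b) (1 : K) ∈ I := by
    intro i hi
    have h1 : monomial (Finsupp.single i 1 + a) (1 : K) ∈ J := by
      have := (ha _).1 hi
      rwa [X, monomial_mul, one_mul] at this
    have hmod : a i % q = q - 1 := by
      by_contra hc
      have hlt : a i % q + 1 < q := by
        have := Nat.mod_lt (a i) hq0
        omega
      apply haJ
      rw [hJI a b hb]
      refine (hJI _ b ?_).1 h1
      intro j
      rw [hb, Finsupp.add_apply]
      by_cases hij : i = j
      · subst hij
        rw [Finsupp.single_eq_same]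
        have h3 := Nat.div_add_mod (a i) q
        conv_rhs => rw [← h3]
        rw [show 1 + (q * (a i / q) + a i % q) = (a i % q + 1) + q * (a i / q) by ring,
          Nat.add_mul_div_left _ _ hq0, Nat.div_eq_of_lt hlt, zero_add]
      · rw [Finsupp.single_eq_of_ne (Ne.symm hij), zero_add]
    refine ⟨hmod, ?_⟩
    refine (hJI _ _ ?_).1 h1
    intro j
    rw [Finsupp.add_apply, Finsupp.add_apply, hb]
    by_cases hij : i = j
    · subst hij
      rw [Finsupp.single_eq_same]
      have h3 := Nat.div_add_mod (a i) q
      conv_rhs => rw [← h3]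
      rw [show 1 + (q * (a i / q) + a i % q) = q + q * (a i / q) by omega,
        Nat.add_mul_div_left _ _ hq0, Nat.div_self hq0]
    · rw [Finsupp.single_eq_of_ne (Ne.symm hij), zero_add, zero_add]
  have hIm : MonClosed I := isMonomialIdeal_monClosed ⟨_, rfl⟩
  have hvar : ∀ c : Fin n →₀ ℕ, monomial c (1 : K) ∈ P → ∃ i, c i ≠ 0 ∧ X i ∈ P := by
    intro c hc
    rw [monomial_eq, C_1, one_mul, Finsupp.prod, hPp.prod_mem_iff] at hc
    obtain ⟨i, hi, hi'⟩ := hc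
    exact ⟨i, Finsupp.mem_support_iff.1 hi, hPp.mem_of_pow_mem _ hi'⟩
  have hcol : I.colon (Ideal.span {monomial b (1 : K)}) = P := by
    apply le_antisymm
    · intro g hg
      rw [Ideal.mem_colon_span_singleton] at hg
      refine mem_of_support fun c hc => ?_
      have h1 : monomial (c + b) (1 : K) ∈ I := by
        refine hIm _ hg _ ?_
        rw [mem_support_iff, coeff_mul_monomial]
        simpa using hc
      have h2 : monomial (q • c + a) (1 : K) ∈ J := by
        refine (hJI _ _ ?_).2 h1
        intro i
        rw [Finsupp.add_apply, Finsupp.add_apply, hb, Finsupp.smul_apply, smul_eq_mul,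
          add_comm (q * c i), Nat.add_mul_div_left _ _ hq0, add_comm]
      refine hPp.mem_of_pow_mem q ?_
      rw [ha, monomial_pow, one_pow, monomial_mul, one_mul]
      exact h2
    · intro g hg
      refine mem_of_support fun c hc => ?_
      obtain ⟨i, hi, hXi⟩ := hvar c (hPm g hg c hc)
      rw [Ideal.mem_colon_span_singleton, monomial_mul, one_mul]
      obtain ⟨t, ht, hle⟩ := (hImem _).1 (hX i hXi).2
      refine (hImem _).2 ⟨t, ht, hle.trans (add_le_add_left ?_ b)⟩
      rw [Finsupp.single_le_iff]
      omega
  have hPI : P ∈ Ass I := (mem_Ass_iff I P).2 ⟨hPp, _, hcol⟩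
  let A : Finset (Fin n) := Finset.univ.filter fun i => X i ∈ P
  have hA : ∀ i, i ∈ A ↔ (X i : MvPolynomial (Fin n) K) ∈ P := by intro i; simp [A]
  have hht : heightI I ≤ A.card := heightI_le hPI hPm A hA
  have hv : vnum I ≤ ∑ i, b i := by
    refine Nat.sInf_le ⟨monomial b 1, isHomogeneous_monomial _ ?_, P, hPI, hcol⟩
    rw [Finsupp.degree_eq_sum]
  have hr : (q - 1) * A.card ≤ ∑ i, a i % q := by
    calc (q - 1) * A.card = ∑ i ∈ A, a i % q := by
          rw [Finset.sum_congr rfl fun i hi => (hX i ((hA i).1 hi)).1]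
          simp [mul_comm]
      _ ≤ _ := Finset.sum_le_sum_of_subset (Finset.subset_univ _)
  calc q * vnum I + (q - 1) * heightI I ≤ q * ∑ i, b i + (q - 1) * A.card := by gcongr
    _ ≤ q * ∑ i, b i + ∑ i, a i % q := by gcongr
    _ = ∑ i, a i := by
      rw [Finset.mul_sum, ← Finset.sum_add_distrib]
      exact Finset.sum_congr rfl fun i _ => Nat.div_add_mod (a i) q
    _ = d := had

end
end

section
/- Let S = K[x_1,…,x_n] be a standard graded polynomial ring over a field K of prime characteristic p, and let I ⊂ S be a proper nonzero graded ideal. Then the limit of the sequence e ↦ v(I^{[p^e]})/p^e as e → ∞ exists (the sequence converges to a real number). -/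
open MvPolynomial

attribute [local instance] MvPolynomial.gradedAlgebra

noncomputable section

variable {K : Type*} [Field K] {n : ℕ}

open MvPolynomial

/-- A field admits coordinates over its subfield of `q`-th powers (generic version). -/
theorem field_coords {K L : Type*} [Field K] [Field L] [Algebra K L] (s : Finset L) :
    ∃ (J : Finset L) (l : L → L →+ K), 
      (∀ j r x, l j (algebraMap K L r * x) = r * l j x) ∧
      ∀ x ∈ s, ∑ j ∈ J, j * algebraMap K L (l j x) = x := by
  classical
  let b := Module.Basis.ofVectorSpace K L
  let l : L → L →+ K := fun j => if h : j ∈ Module.Basis.ofVectorSpaceIndex K L then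
    (b.coord ⟨j, h⟩).toAddMonoidHom else 0
  refine ⟨s.biUnion (fun x => (b.repr x).support.image Subtype.val), l, ?_, ?_⟩
  · intro j r x
    by_cases h : j ∈ Module.Basis.ofVectorSpaceIndex K L
    · simp only [l, h, dif_pos]
      rw [← Algebra.smul_def]
      simp
    · simp [l, h]
  · intro x hx
    have h1 : ∑ j ∈ (b.repr x).support.image Subtype.val, j * algebraMap K L (l j x) = x := by
      rw [Finset.sum_image (fun _ _ _ _ h => Subtype.ext h)]
      conv_rhs => rw [← b.linearCombination_repr x, Finsupp.linearCombination_apply, Finsupp.sum]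
      refine Finset.sum_congr rfl fun i _ => ?_
      rw [Algebra.smul_def, mul_comm]
      simp [l, b]
    rw [← Finset.sum_subset (Finset.subset_biUnion_of_mem
      (fun x => (b.repr x).support.image Subtype.val) hx), h1]
    intro j _ hj
    by_cases h : j ∈ Module.Basis.ofVectorSpaceIndex K L
    · have : b.repr x ⟨j, h⟩ = 0 := by
        by_contra h0
        exact hj (Finset.mem_image.2 ⟨⟨j, h⟩, Finsupp.mem_support_iff.2 h0, rfl⟩)
      simp [l, h, this]
    · simp [l, h]

theorem field_coords_frob {K : Type*} [Field K] (p : ℕ) [Fact p.Prime] [CharP K p] (e : ℕ)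
    (s : Finset K) :
    ∃ (J : Finset K) (l : K → K →+ K),
      (∀ j r x, l j (r ^ p ^ e * x) = r * l j x) ∧
      ∀ x ∈ s, ∑ j ∈ J, j * (l j x) ^ p ^ e = x :=
  @field_coords K K _ _ (iterateFrobenius K p e).toAlgebra s

/-- the coordinate maps on monomials -/
def coordMap {K : Type*} [Field K] {n : ℕ} (q : ℕ) (l : K →+ K) (a : Fin n →₀ ℕ) :
    MvPolynomial (Fin n) K →+ MvPolynomial (Fin n) K := by
  classical
  exact AddMonoidHom.comp (Finsupp.liftAddHom fun v =>
    if v.mapRange (· % q) (Nat.zero_mod q) = a then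
      ((monomial (v.mapRange (· / q) (Nat.zero_div q)) : K →ₗ[K] _).toAddMonoidHom.comp l) else 0) AddMonoidAlgebra.coeffAddEquiv.toAddMonoidHom

open Classical in
theorem coordMap_monomial {K : Type*} [Field K] {n : ℕ} (q : ℕ) (l : K →+ K) (a v : Fin n →₀ ℕ)
    (r : K) : coordMap q l a (monomial v r) =
      if v.mapRange (· % q) (Nat.zero_mod q) = a then
        monomial (v.mapRange (· / q) (Nat.zero_div q)) (l r) else 0 := by
  have h := Finsupp.liftAddHom_apply_single (fun v : Fin n →₀ ℕ =>
    if v.mapRange (· % q) (Nat.zero_mod q) = a then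
      ((monomial (v.mapRange (· / q) (Nat.zero_div q)) :
        K →ₗ[K] MvPolynomial (Fin n) K).toAddMonoidHom.comp l) else 0) v r
  refine Eq.trans h ?_
  split_ifs <;> rfl

theorem coordMap_mul {K : Type*} [Field K] {n : ℕ} (p : ℕ) [Fact p.Prime] [CharP K p] (e : ℕ)
    (l : K →+ K) (hl : ∀ r x, l (r ^ p ^ e * x) = r * l x) (a : Fin n →₀ ℕ)
    (g f : MvPolynomial (Fin n) K) :
    coordMap (p ^ e) l a (g ^ p ^ e * f) = g * coordMap (p ^ e) l a f := by
  have hq : 0 < p ^ e := pow_pos (Fact.out : p.Prime).pos e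
  rw [g.as_sum, sum_pow_char_pow, Finset.sum_mul, map_sum, Finset.sum_mul]
  refine Finset.sum_congr rfl fun u _ => ?_
  generalize coeff u g = r
  conv_lhs => rw [f.as_sum]
  conv_rhs => rw [f.as_sum]
  rw [Finset.mul_sum, map_sum, map_sum, Finset.mul_sum]
  refine Finset.sum_congr rfl fun v _ => ?_
  rw [monomial_pow, monomial_mul, coordMap_monomial, coordMap_monomial, hl]
  have h1 : (p ^ e • u + v).mapRange (· % p ^ e) (Nat.zero_mod _) =
      v.mapRange (· % p ^ e) (Nat.zero_mod _) := by
    ext i; simp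
  have h2 : (p ^ e • u + v).mapRange (· / p ^ e) (Nat.zero_div _) =
      u + v.mapRange (· / p ^ e) (Nat.zero_div _) := by
    ext i; simp [Nat.mul_add_div hq]
  rw [h1, h2]
  split_ifs
  · rw [monomial_mul]
  · simp

theorem coordMap_sum {K : Type*} [Field K] {n : ℕ} (p : ℕ) [Fact p.Prime] [CharP K p] (e : ℕ)
    (f : MvPolynomial (Fin n) K) :
    f ∈ Ideal.span {g | ∃ c : MvPolynomial (Fin n) K →+ MvPolynomial (Fin n) K,
      (∀ g f, c (g ^ p ^ e * f) = g * c f) ∧ g = c f ^ p ^ e} := by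
  classical
  obtain ⟨J, l, hl, hs⟩ := field_coords_frob p e (f.support.image (fun v => coeff v f))
  have key : f = ∑ a ∈ f.support.image (fun v => v.mapRange (· % p ^ e) (Nat.zero_mod _)),
      ∑ j ∈ J, monomial a j * coordMap (p ^ e) (l j) a f ^ p ^ e := by
    have h1 : ∀ a j, coordMap (p ^ e) (l j) a f ^ p ^ e =
        ∑ v ∈ f.support, coordMap (p ^ e) (l j) a (monomial v (coeff v f)) ^ p ^ e := by
      intro a j
      conv_lhs => rw [f.as_sum, map_sum, sum_pow_char_pow]
    simp_rw [h1, Finset.mul_sum]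
    conv_lhs => rw [f.as_sum]
    have h2 : ∀ v ∈ f.support, monomial v (coeff v f) =
      ∑ a ∈ f.support.image (fun v => v.mapRange (· % p ^ e) (Nat.zero_mod _)),
      ∑ j ∈ J, monomial a j * coordMap (p ^ e) (l j) a (monomial v (coeff v f)) ^ p ^ e := by
      intro v hv
      rw [Finset.sum_eq_single (v.mapRange (· % p ^ e) (Nat.zero_mod _))]
      · conv_lhs => rw [← hs _ (Finset.mem_image_of_mem _ hv), map_sum]
        refine Finset.sum_congr rfl fun j _ => ?_
        rw [coordMap_monomial, if_pos rfl, monomial_pow, monomial_mul]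
        congr 1
        congr 1
        ext i
        simp [Nat.mod_add_div]
      · intro a _ ha
        refine Finset.sum_eq_zero fun j _ => ?_
        rw [coordMap_monomial, if_neg (Ne.symm ha), zero_pow, mul_zero]
        exact (pow_pos (Fact.out : p.Prime).pos e).ne'
      · intro h
        exact absurd (Finset.mem_image_of_mem _ hv) h
    rw [Finset.sum_congr rfl h2, Finset.sum_comm]
    refine Finset.sum_congr rfl fun a _ => ?_
    exact Finset.sum_comm
  refine Eq.mpr (congrArg (fun x => x ∈ Ideal.span _) key) ?_
  refine Ideal.sum_mem _ fun a _ => Ideal.sum_mem _ fun j _ => Ideal.mul_mem_left _ _ ?_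
  exact Ideal.subset_span ⟨_, coordMap_mul p e (l j) (hl j) a, rfl⟩

theorem frobPow_eq_map {K : Type*} [Field K] {n : ℕ} (p : ℕ) [Fact p.Prime] [CharP K p] (e : ℕ)
    (I : Ideal (MvPolynomial (Fin n) K)) :
    frobPow I (p ^ e) = I.map (iterateFrobenius (MvPolynomial (Fin n) K) p e) := rfl

theorem mem_frobPow_iff {K : Type*} [Field K] {n : ℕ} (p : ℕ) [Fact p.Prime] [CharP K p] (e : ℕ)
    (I : Ideal (MvPolynomial (Fin n) K)) (f : MvPolynomial (Fin n) K) :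
    f ∈ frobPow I (p ^ e) ↔ ∀ c : MvPolynomial (Fin n) K →+ MvPolynomial (Fin n) K,
      (∀ g f, c (g ^ p ^ e * f) = g * c f) → c f ∈ I := by
  constructor
  · intro hf c hc
    unfold frobPow at hf
    induction hf using Submodule.span_induction with
    | mem x hx =>
      obtain ⟨a, ha, rfl⟩ := hx
      have := hc a 1
      rw [mul_one] at this
      simp only [this]
      exact I.mul_mem_right _ ha
    | zero => simp
    | add x y _ _ hx hy => rw [map_add]; exact I.add_mem hx hy
    | smul a x hx h =>
      clear h
      induction hx using Submodule.span_induction generalizing a with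
      | mem x hx =>
        obtain ⟨b, hb, rfl⟩ := hx
        simp only [smul_eq_mul]
        rw [mul_comm, hc]
        exact I.mul_mem_right _ hb
      | zero => simp
      | add x y _ _ hx hy => rw [smul_add, map_add]; exact I.add_mem (hx a) (hy a)
      | smul b x _ h => rw [smul_smul]; exact h _
  · intro h
    refine (Ideal.span_le.2 ?_) (coordMap_sum p e f)
    rintro g ⟨c, hc, rfl⟩
    exact Ideal.subset_span ⟨c f, h c hc, rfl⟩

theorem mem_colon_span_iff {K : Type*} [Field K] {n : ℕ}
    (I : Ideal (MvPolynomial (Fin n) K)) (f a : MvPolynomial (Fin n) K) :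
    a ∈ I.colon (Ideal.span {f} : Ideal (MvPolynomial (Fin n) K)) ↔ a * f ∈ I := by
  rw [Submodule.mem_colon]
  constructor
  · intro h
    exact h f (Ideal.subset_span rfl)
  · intro h s hs
    obtain ⟨t, rfl⟩ := Ideal.mem_span_singleton'.1 hs
    rw [smul_eq_mul, mul_left_comm]
    exact I.mul_mem_left _ h

theorem mem_Ass_of_colon {K : Type*} [Field K] {n : ℕ}
    (I 𝔭 : Ideal (MvPolynomial (Fin n) K)) (f : MvPolynomial (Fin n) K) (h𝔭 : 𝔭.IsPrime)
    (h : I.colon (Ideal.span {f} : Ideal (MvPolynomial (Fin n) K)) = 𝔭) : 𝔭 ∈ Ass I := by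
  refine (Submodule.isAssociatedPrime_iff).2 ⟨h𝔭, Ideal.Quotient.mk I f, ?_⟩
  ext a
  rw [← h, mem_colon_span_iff, Submodule.mem_colon_singleton, Submodule.mem_bot,
    ← Ideal.Quotient.eq_zero_iff_mem, map_mul]
  rfl

theorem frobPow_frobPow {K : Type*} [Field K] {n : ℕ} (p : ℕ) [Fact p.Prime] [CharP K p] (e : ℕ)
    (I : Ideal (MvPolynomial (Fin n) K)) :
    frobPow (frobPow I (p ^ e)) (p ^ 1) = frobPow I (p ^ (e + 1)) := by
  rw [frobPow_eq_map, frobPow_eq_map, frobPow_eq_map, Ideal.map_map]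
  congr 1
  refine RingHom.ext fun x => ?_
  rw [RingHom.comp_apply, iterateFrobenius_def, iterateFrobenius_def, iterateFrobenius_def,
    ← pow_mul, ← pow_add]

theorem colon_step {K : Type*} [Field K] {n : ℕ} (p : ℕ) [Fact p.Prime] [CharP K p] (e : ℕ)
    (J 𝔭 : Ideal (MvPolynomial (Fin n) K)) (f g : MvPolynomial (Fin n) K)
    (hf : J.colon (Ideal.span {f} : Ideal (MvPolynomial (Fin n) K)) = 𝔭)
    (hg : (frobPow 𝔭 (p ^ e)).colon (Ideal.span {g} : Ideal (MvPolynomial (Fin n) K)) = 𝔭) :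
    (frobPow J (p ^ e)).colon
      (Ideal.span {f ^ p ^ e * g} : Ideal (MvPolynomial (Fin n) K)) = 𝔭 := by
  ext a
  conv_rhs => rw [← hg]
  rw [mem_colon_span_iff, mem_colon_span_iff, mem_frobPow_iff, mem_frobPow_iff]
  refine forall_congr' fun c => forall_congr' fun hc => ?_
  rw [mul_left_comm, hc, ← hf, mem_colon_span_iff, mul_comm]

theorem frobPow_prim {K : Type*} [Field K] {n : ℕ} (p : ℕ) [Fact p.Prime] [CharP K p] (e : ℕ)
    (Q : Ideal (MvPolynomial (Fin n) K)) (hQ : Q.IsPrimary) (a f : MvPolynomial (Fin n) K)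
    (ha : a ∉ Q.radical) (h : a * f ∈ frobPow Q (p ^ e)) : f ∈ frobPow Q (p ^ e) := by
  have hq : 0 < p ^ e := pow_pos (Fact.out : p.Prime).pos e
  have h2 : a ^ p ^ e * f ∈ frobPow Q (p ^ e) := by
    obtain ⟨m, hm⟩ := Nat.exists_eq_succ_of_ne_zero hq.ne'
    rw [hm, pow_succ, mul_assoc, ← hm]
    exact Ideal.mul_mem_left _ _ h
  rw [mem_frobPow_iff] at h2 ⊢
  intro c hc
  have h3 := h2 c hc
  rw [hc, mul_comm] at h3
  exact ((Ideal.isPrimary_iff.1 hQ).2 h3).resolve_right ha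

theorem finite_primes {K : Type*} [Field K] {n : ℕ} (p : ℕ) [Fact p.Prime] [CharP K p]
    (I : Ideal (MvPolynomial (Fin n) K)) :
    ∃ F : Finset (Ideal (MvPolynomial (Fin n) K)), ∀ (e : ℕ) (f : MvPolynomial (Fin n) K)
      (𝔭 : Ideal (MvPolynomial (Fin n) K)), 𝔭.IsPrime →
      (frobPow I (p ^ e)).colon (Ideal.span {f} : Ideal (MvPolynomial (Fin n) K)) = 𝔭 →
      𝔭 ∈ F := by
  classical
  obtain ⟨s, hs, hprim⟩ := Submodule.isLasker (MvPolynomial (Fin n) K) (MvPolynomial (Fin n) K) I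
  refine ⟨s.image Ideal.radical, fun e f 𝔭 h𝔭 h => ?_⟩
  have hq : 0 < p ^ e := pow_pos (Fact.out : p.Prime).pos e
  have hmem : ∀ x, x ∈ frobPow I (p ^ e) ↔ ∀ Q ∈ s, x ∈ frobPow Q (p ^ e) := by
    intro x
    simp only [mem_frobPow_iff]
    simp only [← hs, Submodule.mem_finsetInf, id]
    exact ⟨fun h Q hQ c hc => h c hc Q hQ, fun h c hc Q hQ => h Q hQ c hc⟩
  have hle : s.inf (fun Q => (frobPow Q (p ^ e)).colon
      (Ideal.span {f} : Ideal (MvPolynomial (Fin n) K))) ≤ 𝔭 := by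
    intro x hx
    rw [Submodule.mem_finsetInf] at hx
    rw [← h, mem_colon_span_iff, hmem]
    intro Q hQ
    exact (mem_colon_span_iff _ _ _).1 (hx Q hQ)
  obtain ⟨Q, hQ, hQ2⟩ := (Ideal.IsPrime.inf_le' h𝔭).1 hle
  refine Finset.mem_image.2 ⟨Q, hQ, le_antisymm ?_ ?_⟩
  · refine h𝔭.radical_le_iff.2 fun a ha => ?_
    refine h𝔭.mem_of_pow_mem (p ^ e) (hQ2 ?_)
    rw [mem_colon_span_iff]
    exact Ideal.mul_mem_right _ _ (Ideal.subset_span ⟨a, ha, rfl⟩)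
  · intro a ha
    by_contra hna
    rw [← h, mem_colon_span_iff, hmem] at ha
    have := frobPow_prim p e Q (hprim hQ) a f hna (ha Q hQ)
    refine h𝔭.ne_top ((Ideal.eq_top_iff_one _).2 (hQ2 ?_))
    rw [mem_colon_span_iff, one_mul]
    exact this

theorem isGraded_frobPow {K : Type*} [Field K] {n : ℕ} (p : ℕ) [Fact p.Prime] [CharP K p] (e : ℕ)
    (I : Ideal (MvPolynomial (Fin n) K)) (hI : IsGraded I) : IsGraded (frobPow I (p ^ e)) := by
  obtain ⟨s, hs⟩ := (Ideal.IsHomogeneous.iff_exists _ I).1 hI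
  rw [frobPow_eq_map, hs, Ideal.map_span]
  refine Ideal.homogeneous_span _ _ ?_
  rintro _ ⟨_, ⟨x, hx, rfl⟩, rfl⟩
  obtain ⟨i, hi⟩ := x.2
  exact ⟨i * p ^ e, (MvPolynomial.IsHomogeneous.pow hi (p ^ e))⟩

theorem isGraded_colon {K : Type*} [Field K] {n : ℕ} 
    (I : Ideal (MvPolynomial (Fin n) K)) (hI : IsGraded I) (f : MvPolynomial (Fin n) K) (d : ℕ)
    (hf : f.IsHomogeneous d) :
    IsGraded (I.colon (Ideal.span {f} : Ideal (MvPolynomial (Fin n) K))) := by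
  intro i r hr
  rw [mem_colon_span_iff] at hr ⊢
  have h := hI (i + d) hr
  rwa [DirectSum.coe_decompose_mul_add_of_right_mem _ hf] at h

theorem exists_hom_notMem {K : Type*} [Field K] {n : ℕ} 
    (I J : Ideal (MvPolynomial (Fin n) K)) (hI : IsGraded I) (h : ¬ I ≤ J) :
    ∃ (d : ℕ) (g : MvPolynomial (Fin n) K), g.IsHomogeneous d ∧ g ∈ I ∧ g ∉ J := by
  classical
  by_contra hcon
  push Not at hcon
  refine h fun x hx => ?_
  rw [← DirectSum.sum_support_decompose (homogeneousSubmodule (Fin n) K) x]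
  refine Ideal.sum_mem _ fun i _ => hcon i _ ?_ (hI i hx)
  exact (DirectSum.decompose (homogeneousSubmodule (Fin n) K) x i).2

theorem isGraded_pow {K : Type*} [Field K] {n : ℕ} 
    (I : Ideal (MvPolynomial (Fin n) K)) (hI : IsGraded I) (k : ℕ) : IsGraded (I ^ k) := by
  induction k with
  | zero => rw [pow_zero, Ideal.one_eq_top]; exact Ideal.IsHomogeneous.top _
  | succ k ih => rw [pow_succ]; exact Ideal.IsHomogeneous.mul ih hI

theorem exists_socle {K : Type*} [Field K] {n : ℕ} (p : ℕ) [Fact p.Prime] [CharP K p] (e : ℕ)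
    (𝔭 : Ideal (MvPolynomial (Fin n) K)) (h𝔭 : 𝔭.IsPrime) (hgr : IsGraded 𝔭) :
    ∃ (d : ℕ) (g : MvPolynomial (Fin n) K), g.IsHomogeneous d ∧
      (frobPow 𝔭 (p ^ e)).colon (Ideal.span {g} : Ideal (MvPolynomial (Fin n) K)) = 𝔭 := by
  classical
  have hq : 0 < p ^ e := pow_pos (Fact.out : p.Prime).pos e
  have hle : frobPow 𝔭 (p ^ e) ≤ 𝔭 := by
    refine Ideal.span_le.2 ?_
    rintro _ ⟨a, ha, rfl⟩
    exact 𝔭.pow_mem_of_mem ha _ hq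
  have hrad : 𝔭 ≤ (frobPow 𝔭 (p ^ e)).radical := fun a ha =>
    ⟨p ^ e, Ideal.subset_span ⟨a, ha, rfl⟩⟩
  have hex : ∃ k, 𝔭 ^ k ≤ frobPow 𝔭 (p ^ e) :=
    Ideal.exists_pow_le_of_le_radical_of_fg hrad (IsNoetherian.noetherian _)
  have hspec := Nat.find_spec hex
  have hmin : ∀ m < Nat.find hex, ¬ _ := fun m hm => Nat.find_min hex hm
  generalize Nat.find hex = k at hspec hmin
  rcases k with _ | k
  · rw [pow_zero, Ideal.one_eq_top] at hspec
    exact absurd (top_le_iff.1 (hspec.trans hle)) h𝔭.ne_top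
  · obtain ⟨d, g, hg, hgk, hgn⟩ := exists_hom_notMem _ _ (isGraded_pow 𝔭 hgr k)
      (hmin k (Nat.lt_succ_self k))
    refine ⟨d, g, hg, le_antisymm ?_ ?_⟩
    · intro a ha
      rw [mem_colon_span_iff] at ha
      by_contra hna
      exact hgn (frobPow_prim p e 𝔭 h𝔭.isPrimary a g (by rwa [h𝔭.radical]) ha)
    · intro a ha
      rw [mem_colon_span_iff]
      apply hspec
      rw [pow_succ, mul_comm a g]
      exact Ideal.mul_mem_mul hgk ha

/-- The set of degrees in the definition of `vnum`. -/
def vset {K : Type*} [Field K] {n : ℕ} (I : Ideal (MvPolynomial (Fin n) K)) : Set ℕ :=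
  {d : ℕ | ∃ f : MvPolynomial (Fin n) K, f.IsHomogeneous d ∧
    ∃ 𝔭 ∈ Ass I, I.colon (Ideal.span {f}) = 𝔭}

theorem vset_step {K : Type*} [Field K] {n : ℕ} (p : ℕ) [Fact p.Prime] [CharP K p]
    (I : Ideal (MvPolynomial (Fin n) K)) (hgr : IsGraded I) :
    ∃ C : ℕ, ∀ e d, d ∈ vset (frobPow I (p ^ e)) →
      ∃ d' ∈ vset (frobPow I (p ^ (e + 1))), d' ≤ p * d + C := by
  classical
  obtain ⟨F, hF⟩ := finite_primes p I
  let P : Ideal (MvPolynomial (Fin n) K) → ℕ → Prop := fun 𝔭 d => 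
    ∃ g : MvPolynomial (Fin n) K, g.IsHomogeneous d ∧
      (frobPow 𝔭 (p ^ 1)).colon (Ideal.span {g} : Ideal (MvPolynomial (Fin n) K)) = 𝔭
  let D : Ideal (MvPolynomial (Fin n) K) → ℕ := fun 𝔭 =>
    if h : ∃ d, P 𝔭 d then h.choose else 0
  refine ⟨F.sup D, ?_⟩
  rintro e d ⟨f, hf, 𝔭, hA, hcol⟩
  have h𝔭 : 𝔭.IsPrime := IsAssociatedPrime.isPrime hA
  have hg : IsGraded 𝔭 := hcol ▸ isGraded_colon _ (isGraded_frobPow p e I hgr) f d hf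
  have hmem := hF e f 𝔭 h𝔭 hcol
  have hex : ∃ d, P 𝔭 d := exists_socle p 1 𝔭 h𝔭 hg
  have hD : P 𝔭 (D 𝔭) := by
    simp only [D, dif_pos hex]
    exact hex.choose_spec
  obtain ⟨g, hgh, hgc⟩ := hD
  have hstep := colon_step p 1 _ 𝔭 f g hcol hgc
  rw [frobPow_frobPow] at hstep
  refine ⟨d * p ^ 1 + D 𝔭, ⟨f ^ p ^ 1 * g, (hf.pow (p ^ 1)).mul hgh, 𝔭,
    mem_Ass_of_colon _ _ _ h𝔭 hstep, hstep⟩, ?_⟩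
  have := Finset.le_sup (f := D) hmem
  rw [pow_one, mul_comm]
  omega

theorem limit_aux (v : ℕ → ℕ) (p C : ℕ) (hp : 2 ≤ p) (h : ∀ e, v (e + 1) ≤ p * v e + C) :
    ∃ L : ℝ, Filter.Tendsto (fun e : ℕ => (v e : ℝ) / (p ^ e : ℝ)) Filter.atTop (nhds L) := by
  have hp' : (2 : ℝ) ≤ p := by exact_mod_cast hp
  have hanti : Antitone (fun e : ℕ => (v e : ℝ) / (p ^ e : ℝ) + C / (p ^ e : ℝ)) := by
    refine antitone_nat_of_succ_le fun e => ?_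
    have h1 : (v (e + 1) : ℝ) ≤ p * v e + C := by exact_mod_cast h e
    rw [← add_div, ← add_div, pow_succ, div_le_div_iff₀ (by positivity) (by positivity)]
    have h2 : (v (e + 1) : ℝ) + C ≤ (v e + C) * p := by
      nlinarith [(Nat.cast_nonneg C : (0 : ℝ) ≤ C)]
    calc _ ≤ (v e + C) * p * (p ^ e : ℝ) := by gcongr
      _ = _ := by ring
  have h1 := tendsto_atTop_ciInf hanti ⟨0, by rintro _ ⟨e, rfl⟩; positivity⟩
  have h2 : Filter.Tendsto (fun e : ℕ => (C : ℝ) / (p ^ e : ℝ)) Filter.atTop (nhds 0) :=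
    tendsto_const_nhds.div_atTop (tendsto_pow_atTop_atTop_of_one_lt (by linarith))
  refine ⟨_, (h1.sub h2).congr fun e => ?_⟩
  ring

theorem stmt13 {K : Type*} [Field K] {n : ℕ} (p : ℕ) (hp : p.Prime) [CharP K p]
    (I : Ideal (MvPolynomial (Fin n) K)) (hgr : IsGraded I) (htop : I ≠ ⊤) (hbot : I ≠ ⊥) :
    ∃ L : ℝ, Filter.Tendsto (fun e : ℕ => (vnum (frobPow I (p ^ e)) : ℝ) / (p ^ e : ℝ))
      Filter.atTop (nhds L) := by
  have : Fact p.Prime := ⟨hp⟩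
  obtain ⟨C, hC⟩ := vset_step p I hgr
  have hv : ∀ J : Ideal (MvPolynomial (Fin n) K), vnum J = sInf (vset J) := fun _ => rfl
  by_cases hne : ∃ e0, (vset (frobPow I (p ^ e0))).Nonempty
  · obtain ⟨e0, h0⟩ := hne
    have hall : ∀ k, (vset (frobPow I (p ^ (k + e0)))).Nonempty := by
      intro k
      induction k with
      | zero => rwa [zero_add]
      | succ k ih =>
        obtain ⟨d, hd⟩ := ih
        obtain ⟨d', hd', _⟩ := hC _ d hd
        rw [add_right_comm]
        exact ⟨d', hd'⟩
    obtain ⟨L, hL⟩ := limit_aux (fun k => vnum (frobPow I (p ^ (k + e0)))) p C hp.two_le (by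
      intro k
      simp only [hv]
      obtain ⟨d', hd', hle⟩ := hC _ _ (Nat.sInf_mem (hall k))
      rw [add_right_comm]
      exact (Nat.sInf_le hd').trans hle)
    refine ⟨L / (p : ℝ) ^ e0, (Filter.tendsto_add_atTop_iff_nat e0).1 ?_⟩
    refine (hL.div_const ((p : ℝ) ^ e0)).congr fun k => ?_
    rw [div_div, ← pow_add]
  · push Not at hne
    refine ⟨0, ?_⟩
    simp [hv, hne]

end
end

section
/- Let S = K[x_1,…,x_n] be a standard graded polynomial ring over a field K of prime characteristic p, and let I ⊂ S be a proper nonzero unmixed monomial ideal. Then the sequence e ↦ v(I^{[p^e]})/p^e converges to v(I) + height(I) as e → ∞. -/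
open MvPolynomial

attribute [local instance] MvPolynomial.gradedAlgebra

noncomputable section

variable {K : Type*} [Field K] {n : ℕ}

/-- `I` is the monomial ideal whose monomials are exactly those with exponents in `M`. -/
def MonRep (I : Ideal (MvPolynomial (Fin n) K)) (M : Set (Fin n →₀ ℕ)) : Prop :=
  ∀ f : MvPolynomial (Fin n) K, f ∈ I ↔ ∀ c ∈ f.support, c ∈ M

/-- Monomial prime. -/
def PA (K : Type*) [Field K] {n : ℕ} (A : Finset (Fin n)) : Ideal (MvPolynomial (Fin n) K) :=
  Ideal.span (X '' (A : Set (Fin n)))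

/-- Combinatorial form of `I : x^b = P_A`. -/
def Cmb (M : Set (Fin n →₀ ℕ)) (b : Fin n →₀ ℕ) (A : Finset (Fin n)) : Prop :=
  (∀ i ∈ A, Finsupp.single i 1 + b ∈ M) ∧ ∀ c : Fin n →₀ ℕ, (∀ i ∈ A, c i = 0) → c + b ∉ M

theorem MonRep.mono {I : Ideal (MvPolynomial (Fin n) K)} {M} (h : MonRep I M) (c : Fin n →₀ ℕ) :
    monomial c (1 : K) ∈ I ↔ c ∈ M := by
  classical
  rw [h]; simp [support_monomial]

theorem MonRep.up {I : Ideal (MvPolynomial (Fin n) K)} {M} (h : MonRep I M) (c d : Fin n →₀ ℕ)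
    (hc : c ∈ M) : d + c ∈ M := by
  rw [← h.mono] at hc ⊢
  have := I.mul_mem_left (monomial d (1 : K)) hc
  simpa [monomial_mul] using this

theorem rep_of_mon {I : Ideal (MvPolynomial (Fin n) K)} (h : IsMonomialIdeal I) :
    ∃ M, MonRep I M := by
  obtain ⟨s, rfl⟩ := h
  exact ⟨{c | ∃ a ∈ s, a ≤ c}, fun f => mem_ideal_span_monomial_image⟩

theorem rep_PA (A : Finset (Fin n)) : MonRep (PA K A) {c | ∃ i ∈ A, c i ≠ 0} := by
  intro f
  simpa using! (mem_ideal_span_X_image (x := f) (s := (A : Set (Fin n))))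

theorem split_supp (M : Set (Fin n →₀ ℕ)) (f : MvPolynomial (Fin n) K) :
    ∃ f1 f2, f = f1 + f2 ∧ (∀ c ∈ f1.support, c ∈ M) ∧ (∀ c ∈ f2.support, c ∉ M) ∧
      f2.support ⊆ f.support := by
  classical
  have key : ∀ (T : Finset (Fin n →₀ ℕ)) (c), coeff c (∑ d ∈ T, monomial d (coeff d f)) =
      if c ∈ T then coeff c f else 0 := by
    intro T c
    rw [coeff_sum]
    simp [coeff_monomial]
  refine ⟨∑ d ∈ f.support.filter (· ∈ M), monomial d (coeff d f),
    ∑ d ∈ f.support.filter (· ∉ M), monomial d (coeff d f), ?_, ?_, ?_, ?_⟩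
  · conv_lhs => rw [f.as_sum]
    rw [Finset.sum_filter_add_sum_filter_not]
  · intro c hc
    rw [mem_support_iff, key] at hc
    by_contra hcM
    simp [hcM] at hc
  · intro c hc hcM
    rw [mem_support_iff, key] at hc
    simp [hcM] at hc
  · intro c hc
    rw [mem_support_iff, key] at hc
    by_contra hcM
    simp at hcM
    simp [hcM] at hc

theorem key_mul {I J : Ideal (MvPolynomial (Fin n) K)} {M N} (hI : MonRep I M) (hJ : MonRep J N)
    {f : MvPolynomial (Fin n) K} (hf : f ≠ 0)
    (h : ∀ m ∈ f.support, ∀ u, u + m ∈ M ↔ u ∈ N) (g : MvPolynomial (Fin n) K)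
    (hg : g * f ∈ I) : g ∈ J := by
  classical
  obtain ⟨g1, g2, rfl, h1, h2, -⟩ := split_supp N g
  have hg1 : g1 * f ∈ I := by
    rw [hI]
    intro c hc
    obtain ⟨u, hu, m, hm, rfl⟩ := Finset.mem_add.1 (support_mul _ _ hc)
    exact (h m hm u).2 (h1 u hu)
  have hg2 : g2 * f ∈ I := by
    rw [add_mul] at hg
    exact (I.add_mem_iff_right hg1).1 hg
  have : g2 = 0 := by
    by_contra hne
    have hmem : MonomialOrder.lex.degree g2 + MonomialOrder.lex.degree f ∈ (g2 * f).support := by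
      rw [← MonomialOrder.degree_mul hne hf]
      exact MonomialOrder.degree_mem_support (mul_ne_zero hne hf)
    have h3 := (hI _).1 hg2 _ hmem
    rw [h _ (MonomialOrder.degree_mem_support hf)] at h3
    exact h2 _ (MonomialOrder.degree_mem_support hne) h3
  rw [this, add_zero]
  exact (hJ _).2 h1

theorem PA_prime (A : Finset (Fin n)) : (PA K A).IsPrime := by
  have hR := rep_PA (K := K) A
  refine ⟨?_, ?_⟩
  · rw [Ne, Ideal.eq_top_iff_one, hR]
    simp
  · intro f g hfg
    by_contra hcon
    push Not at hcon
    obtain ⟨hf, hg⟩ := hcon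
    obtain ⟨g1, g2, rfl, h1, h2, -⟩ := split_supp {c | ∃ i ∈ A, c i ≠ 0} g
    have hg1 : g1 ∈ PA K A := (hR _).2 h1
    have hg2 : f * g2 ∈ PA K A := by
      rw [mul_add] at hfg
      exact ((PA K A).add_mem_iff_right (Ideal.mul_mem_left _ _ hg1)).1 hfg
    refine hf (key_mul hR hR (f := g2) ?_ ?_ f hg2)
    · rintro rfl
      exact hg (by simpa using hg1)
    · intro m hm u
      have := h2 m hm
      simp only [Set.mem_ofPred_eq, not_exists, not_and, not_not] at this
      simp only [Set.mem_ofPred_eq, Finsupp.add_apply]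
      constructor
      · rintro ⟨i, hi, hc⟩
        exact ⟨i, hi, by simpa [this i hi] using hc⟩
      · rintro ⟨i, hi, hc⟩
        exact ⟨i, hi, by omega⟩

theorem X_mem_PA (A : Finset (Fin n)) (i : Fin n) : (X i : MvPolynomial (Fin n) K) ∈ PA K A ↔ i ∈ A := by
  have := (rep_PA (K := K) A).mono (Finsupp.single i 1)
  rw [X, this]
  simp [Finsupp.single_apply]

theorem height_PA (A : Finset (Fin n)) : (PA K A).height = A.card := by
  classical
  apply le_antisymm
  · have := PA_prime (K := K) A
    have h := Ideal.height_le_card_of_mem_minimalPrimes_span_finset (p := PA K A)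
      (s := A.image X) (by
        rw [Finset.coe_image]
        change PA K A ∈ (PA K A).minimalPrimes
        rw [Ideal.minimalPrimes_eq_subsingleton_self]; rfl)
    exact h.trans (by exact_mod_cast Finset.card_image_le)
  · induction A using Finset.induction_on with
    | empty => simp
    | insert a s ha ih =>
      have := PA_prime (K := K) s
      have := PA_prime (K := K) (insert a s)
      have hlt : PA K s < PA K (insert a s) := by
        refine lt_of_le_of_ne (Ideal.span_mono (Set.image_mono (by simp))) ?_
        intro h
        have h1 := (X_mem_PA (K := K) (insert a s) a).2 (by simp)
        rw [← h, X_mem_PA] at h1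
        exact ha h1
      have h2 := Ideal.height_add_one_le_of_lt_of_isPrime hlt
      rw [Finset.card_insert_of_notMem ha]
      refine le_trans ?_ h2
      push_cast
      gcongr

theorem colon_prime {I : Ideal (MvPolynomial (Fin n) K)} {M} (hI : MonRep I M)
    (P : Ideal (MvPolynomial (Fin n) K)) (hP : P.IsPrime) (f : MvPolynomial (Fin n) K)
    (hf : ∀ g, g ∈ P ↔ g * f ∈ I) : ∃ A : Finset (Fin n), P = PA K A := by
  classical
  let S : Set (MvPolynomial (Fin n) K) := {f | ∀ g, g ∈ P ↔ g * f ∈ I}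
  obtain ⟨f0, hf0, hmin⟩ : ∃ f0 ∈ S, ∀ f1 ∈ S, f0.support.card ≤ f1.support.card := by
    obtain ⟨f0, h0, h1⟩ := WellFounded.has_min (InvImage.wf (fun f : MvPolynomial (Fin n) K =>
      f.support.card) Nat.lt_wfRel.wf) S ⟨f, hf⟩
    exact ⟨f0, h0, fun f1 hf1 => not_lt.1 (h1 f1 hf1)⟩
  have hdisj : ∀ f ∈ S, f.support.card ≤ f0.support.card → ∀ c ∈ f.support, c ∉ M := by
    intro f hf hcard c hc hcM
    obtain ⟨f1, f2, rfl, h1, h2, h3⟩ := split_supp M f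
    have hf1 : f1 ∈ I := (hI _).2 h1
    have hf2 : f2 ∈ S := by
      intro g
      rw [hf g, mul_add, I.add_mem_iff_right (Ideal.mul_mem_left _ _ hf1)]
    have h4 := hmin _ hf2
    have h5 : f2.support.card < (f1 + f2).support.card :=
      Finset.card_lt_card ⟨h3, fun h => h2 c (h hc) hcM⟩
    omega
  have hne : f0 ≠ 0 := by
    rintro rfl
    exact hP.ne_top ((Ideal.eq_top_iff_one _).2 ((hf0 1).2 (by simp)))
  have hmono : ∀ m ∈ f0.support, ∀ u, u + m ∈ M ↔ monomial u (1 : K) ∈ P := by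
    intro m hm u
    have hmem : u + m ∈ (monomial u (1 : K) * f0).support := by
      rw [mem_support_iff, coeff_monomial_mul]
      simpa using hm
    constructor
    · intro hu
      by_contra hcon
      refine hdisj (monomial u (1 : K) * f0) ?_ ?_ _ hmem hu
      · intro g
        rw [← mul_assoc, ← hf0]
        exact ⟨fun h => P.mul_mem_right _ h, fun h => (hP.mem_or_mem h).resolve_right hcon⟩
      · refine (Finset.card_le_card (support_mul _ _)).trans ?_
        refine Finset.card_add_le.trans ?_
        refine (Nat.mul_le_mul_right _ (Finset.card_le_card (support_monomial_subset))).trans ?_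
        simp
    · intro hu
      exact (hI _).1 ((hf0 _).1 hu) _ hmem
  let A : Finset (Fin n) := Finset.univ.filter (fun i => (X i : MvPolynomial (Fin n) K) ∈ P)
  have hle : PA K A ≤ P := by
    rw [PA, Ideal.span_le]
    rintro _ ⟨i, hi, rfl⟩
    simpa [A] using hi
  refine ⟨A, le_antisymm ?_ hle⟩
  intro g hg
  refine key_mul hI (rep_PA (K := K) A) hne ?_ g ((hf0 g).1 hg)
  intro m hm u
  rw [hmono m hm u]
  constructor
  · intro h
    rw [monomial_eq, C_1, one_mul, Finsupp.prod, hP.prod_mem_iff] at h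
    obtain ⟨i, hi, h⟩ := h
    exact ⟨i, by simpa [A] using hP.mem_of_pow_mem _ h, by simpa using hi⟩
  · intro h
    exact hle (((rep_PA (K := K) A).mono u).2 h)

theorem exists_cmb {I : Ideal (MvPolynomial (Fin n) K)} {M} (hI : MonRep I M) (A : Finset (Fin n))
    (f : MvPolynomial (Fin n) K) (hf : ∀ g, g ∈ PA K A ↔ g * f ∈ I) :
    ∃ b ∈ f.support, Cmb M b A := by
  classical
  have hmem : ∀ u, ∀ m ∈ f.support, u + m ∈ (monomial u (1 : K) * f).support := by
    intro u m hm
    rw [mem_support_iff, coeff_monomial_mul]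
    simpa using hm
  have h1 : ∀ m ∈ f.support, ∀ i ∈ A, Finsupp.single i 1 + m ∈ M := by
    intro m hm i hi
    exact (hI _).1 ((hf _).1 ((X_mem_PA A i).2 hi)) _ (hmem _ m hm)
  by_contra hcon
  have h2 : ∀ m, ∃ c : Fin n →₀ ℕ, m ∈ f.support → (∀ i ∈ A, c i = 0) ∧ c + m ∈ M := by
    intro m
    by_cases hm : m ∈ f.support
    · by_contra h
      push Not at h
      exact hcon ⟨m, hm, h1 m hm, fun c hc hcm => (h c).2 hc hcm⟩
    · exact ⟨0, fun h => absurd h hm⟩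
  choose c hc using h2
  have h3 : monomial (∑ m ∈ f.support, c m) (1 : K) ∈ PA K A := by
    rw [hf, hI]
    intro d hd
    obtain ⟨u, hu, m, hm, rfl⟩ := Finset.mem_add.1 (support_mul _ _ hd)
    have hu' := support_monomial_subset hu
    rw [Finset.mem_singleton] at hu'
    subst hu'
    rw [← Finset.sum_erase_add _ _ hm, add_assoc]
    exact hI.up _ _ (hc m hm).2
  rw [(rep_PA A).mono] at h3
  obtain ⟨i, hi, h⟩ := h3
  apply h
  rw [Finsupp.finsetSum_apply]
  exact Finset.sum_eq_zero fun m hm => (hc m hm).1 i hi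

theorem cmb_colon {I : Ideal (MvPolynomial (Fin n) K)} {M} (hI : MonRep I M) (A : Finset (Fin n))
    (b : Fin n →₀ ℕ) (h : Cmb M b A) (g : MvPolynomial (Fin n) K) :
    g ∈ PA K A ↔ g * monomial b 1 ∈ I := by
  classical
  have hu : ∀ u : Fin n →₀ ℕ, u + b ∈ M ↔ ∃ i ∈ A, u i ≠ 0 := by
    intro u
    constructor
    · intro hu
      by_contra hcon
      push Not at hcon
      exact h.2 u hcon hu
    · rintro ⟨i, hi, hne⟩
      have := hI.up _ (u - Finsupp.single i 1) (h.1 i hi)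
      rwa [← add_assoc, tsub_add_cancel_of_le] at this
      rw [Finsupp.single_le_iff]
      omega
  rw [rep_PA A g, hI]
  constructor
  · intro hg c hc
    obtain ⟨u, hu', m, hm, rfl⟩ := Finset.mem_add.1 (support_mul _ _ hc)
    have hm' := support_monomial_subset hm
    rw [Finset.mem_singleton] at hm'
    subst hm'
    exact (hu u).2 (hg u hu')
  · intro hg u hu'
    refine (hu u).1 (hg _ ?_)
    rw [mem_support_iff, coeff_mul_monomial]
    simpa using hu'

theorem ass_iff {I : Ideal (MvPolynomial (Fin n) K)} (P : Ideal (MvPolynomial (Fin n) K)) :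
    P ∈ Ass I ↔ P.IsPrime ∧ ∃ f, ∀ g, g ∈ P ↔ g * f ∈ I := by
  rw [Ass, AssociatedPrimes.mem_iff, isAssociatedPrime_iff]
  refine and_congr_right fun _ => ?_
  constructor
  · rintro ⟨x, rfl⟩
    obtain ⟨f, rfl⟩ := Ideal.Quotient.mk_surjective x
    refine ⟨f, fun g => ?_⟩
    rw [Submodule.mem_colon_singleton, Submodule.mem_bot, ← Ideal.Quotient.eq_zero_iff_mem]
    rfl
  · rintro ⟨f, hf⟩
    refine ⟨Ideal.Quotient.mk I f, ?_⟩
    ext g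
    rw [hf, Submodule.mem_colon_singleton, Submodule.mem_bot, ← Ideal.Quotient.eq_zero_iff_mem]
    rfl

theorem colon_eq_iff {I P : Ideal (MvPolynomial (Fin n) K)} (f : MvPolynomial (Fin n) K) :
    I.colon (Ideal.span {f}) = P ↔ ∀ g, g ∈ P ↔ g * f ∈ I := by
  rw [eq_comm, SetLike.ext_iff]
  simp only [Ideal.mem_colon_span_singleton]

theorem vnum_eq {I : Ideal (MvPolynomial (Fin n) K)} {M} (hI : MonRep I M) :
    vnum I = sInf {d | ∃ b A, Cmb M b A ∧ b.degree = d} := by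
  rw [vnum]
  congr 1
  ext d
  simp only [Set.mem_ofPred_eq]
  constructor
  · rintro ⟨f, hd, P, hP, hc⟩
    rw [colon_eq_iff] at hc
    obtain ⟨A, rfl⟩ := colon_prime hI P ((ass_iff P).1 hP).1 f hc
    obtain ⟨b, hb, h⟩ := exists_cmb hI A f hc
    refine ⟨b, A, h, ?_⟩
    rw [Finsupp.degree_eq_weight_one]
    exact hd (mem_support_iff.1 hb)
  · rintro ⟨b, A, h, rfl⟩
    have := cmb_colon hI A b h
    exact ⟨monomial b 1, isHomogeneous_monomial _ rfl, PA K A,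
      (ass_iff _).2 ⟨PA_prime A, _, this⟩, (colon_eq_iff _).2 this⟩

theorem heights {I : Ideal (MvPolynomial (Fin n) K)} {M} (hI : MonRep I M)
    (hunm : heightI I = bightI I) {b A} (h : Cmb M b A) : A.card = heightI I := by
  have hmem : A.card ∈ {h : ℕ | ∃ 𝔭 ∈ Ass I, ∃ h𝔭 : 𝔭.IsPrime,
    Order.height (⟨𝔭, h𝔭⟩ : PrimeSpectrum (MvPolynomial (Fin n) K)) = (h : ℕ∞)} := by
    refine ⟨PA K A, (ass_iff _).2 ⟨PA_prime A, _, cmb_colon hI A b h⟩, PA_prime A, ?_⟩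
    rw [← PrimeSpectrum.height_eq_orderHeight]
    exact height_PA A
  apply le_antisymm
  · rw [hunm]
    refine le_csSup ⟨n, ?_⟩ hmem
    rintro d ⟨P, hP, hpr, hd⟩
    obtain ⟨-, f, hf⟩ := (ass_iff P).1 hP
    obtain ⟨B, rfl⟩ := colon_prime hI P hpr f hf
    rw [← PrimeSpectrum.height_eq_orderHeight] at hd
    have := (height_PA (K := K) B).symm.trans hd
    have h2 : B.card = d := by exact_mod_cast this
    have := B.card_le_univ
    simp at this
    omega
  · exact Nat.sInf_le hmem

theorem cmb_nonempty {I : Ideal (MvPolynomial (Fin n) K)} {M} (hI : MonRep I M) (htop : I ≠ ⊤) :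
    ∃ b A, Cmb M b A := by
  have : Nontrivial (MvPolynomial (Fin n) K ⧸ I) := Ideal.Quotient.nontrivial_iff.2 htop
  obtain ⟨P, hP⟩ := associatedPrimes.nonempty (MvPolynomial (Fin n) K) (MvPolynomial (Fin n) K ⧸ I)
  obtain ⟨hpr, f, hf⟩ := (ass_iff P).1 hP
  obtain ⟨A, rfl⟩ := colon_prime hI P hpr f hf
  obtain ⟨b, -, h⟩ := exists_cmb hI A f hf
  exact ⟨b, A, h⟩

/-- Componentwise floor division of an exponent vector. -/
def fdiv (q : ℕ) (c : Fin n →₀ ℕ) : Fin n →₀ ℕ := Finsupp.equivFunOnFinite.symm fun i => c i / q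

@[simp] theorem fdiv_apply (q : ℕ) (c : Fin n →₀ ℕ) (i : Fin n) : fdiv q c i = c i / q := rfl

theorem frob_rep (p : ℕ) (hp : p.Prime) [CharP K p] (e : ℕ)
    {I : Ideal (MvPolynomial (Fin n) K)} {M} (hI : MonRep I M) :
    MonRep (frobPow I (p ^ e)) {c | fdiv (p ^ e) c ∈ M} := by
  classical
  have hF : Fact p.Prime := ⟨hp⟩
  have hq : 0 < p ^ e := pow_pos hp.pos e
  have hmon : ∀ c, fdiv (p ^ e) c ∈ M → ∀ a : K, monomial c a ∈ frobPow I (p ^ e) := by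
    intro c hc a
    have h1 : (monomial (fdiv (p ^ e) c) (1 : K)) ^ (p ^ e) ∈ frobPow I (p ^ e) :=
      Ideal.subset_span ⟨_, (hI.mono _).2 hc, rfl⟩
    have h2 := Ideal.mul_mem_left _ (monomial (c - (p ^ e) • fdiv (p ^ e) c) a) h1
    rw [monomial_pow, monomial_mul, one_pow, mul_one, tsub_add_cancel_of_le] at h2
    · exact h2
    · intro i
      simpa using Nat.mul_div_le (c i) (p ^ e)
  have hrep : frobPow I (p ^ e) =
      Ideal.span ((fun a => monomial a (1 : K)) '' {c | fdiv (p ^ e) c ∈ M}) := by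
    apply le_antisymm
    · rw [frobPow, Ideal.span_le]
      rintro _ ⟨f, hf, rfl⟩
      have hf' := (hI f).1 hf
      simp only
      rw [f.as_sum, sum_pow_char_pow]
      refine Ideal.sum_mem _ fun c hc => ?_
      rw [monomial_pow, ← mul_one (coeff c f ^ p ^ e), ← C_mul_monomial]
      refine Ideal.mul_mem_left _ _ (Ideal.subset_span ⟨_, ?_, rfl⟩)
      have : fdiv (p ^ e) (p ^ e • c) = c := by
        ext i
        simp [Nat.mul_div_cancel_left _ hq]
      simpa [this] using hf' c hc
    · rw [Ideal.span_le]
      rintro _ ⟨c, hc, rfl⟩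
      exact hmon c hc 1
  intro f
  constructor
  · intro hf c hc
    rw [hrep, mem_ideal_span_monomial_image] at hf
    obtain ⟨d, hd, hdc⟩ := hf c hc
    have : fdiv (p ^ e) c = (fdiv (p ^ e) c - fdiv (p ^ e) d) + fdiv (p ^ e) d := by
      rw [tsub_add_cancel_of_le]
      intro i
      exact Nat.div_le_div_right (hdc i)
    simp only [Set.mem_ofPred_eq]
    rw [this]
    exact hI.up _ _ hd
  · intro h
    rw [f.as_sum]
    exact Ideal.sum_mem _ fun c hc => hmon c (h c hc) _

theorem cmb_down {M : Set (Fin n →₀ ℕ)} (hup : ∀ c d, c ∈ M → d + c ∈ M) {q : ℕ} (hq : 0 < q)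
    {b A} (h : Cmb {c | fdiv q c ∈ M} b A) :
    Cmb M (fdiv q b) A ∧ q * (fdiv q b).degree + A.card * (q - 1) ≤ b.degree := by
  classical
  have h0 : fdiv q b ∉ M := by simpa using h.2 0 (by simp)
  have hmod : ∀ i ∈ A, b i % q = q - 1 ∧
      fdiv q (Finsupp.single i 1 + b) = Finsupp.single i 1 + fdiv q b := by
    intro i hi
    have hi' : fdiv q (Finsupp.single i 1 + b) ∈ M := h.1 i hi
    have hm : b i % q = q - 1 := by
      by_contra hne
      apply h0
      convert hi' using 1
      ext j
      by_cases hj : i = j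
      · subst hj
        simp only [fdiv_apply, Finsupp.add_apply, Finsupp.single_eq_same]
        have := Nat.mod_lt (b i) hq
        have h3 := Nat.div_add_mod (b i) q
        symm
        rw [Nat.div_eq_iff hq]
        rw [mul_comm] at h3
        omega
      · simp [Finsupp.single_apply, hj]
    refine ⟨hm, ?_⟩
    ext j
    by_cases hj : i = j
    · subst hj
      simp only [fdiv_apply, Finsupp.add_apply, Finsupp.single_eq_same]
      have h3 := Nat.div_add_mod (b i) q
      rw [Nat.div_eq_iff hq, add_mul]
      rw [mul_comm] at h3
      omega
    · simp [Finsupp.single_apply, hj]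
  refine ⟨⟨?_, ?_⟩, ?_⟩
  · intro i hi
    rw [← (hmod i hi).2]
    exact h.1 i hi
  · intro c hc hcM
    refine h.2 (q • c) (fun i hi => by simp [hc i hi]) ?_
    have : fdiv q (q • c + b) = c + fdiv q b := by
      ext i
      simp [Nat.mul_add_div hq]
    simpa [this] using hcM
  · rw [Finsupp.degree_eq_sum, Finsupp.degree_eq_sum, Finset.mul_sum]
    have : A.card * (q - 1) = ∑ i, if i ∈ A then q - 1 else 0 := by
      simp
    rw [this, ← Finset.sum_add_distrib]
    refine Finset.sum_le_sum fun i _ => ?_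
    have h3 := Nat.div_add_mod (b i) q
    rw [fdiv_apply]
    split_ifs with hi
    · rw [← (hmod i hi).1]; omega
    · omega

theorem cmb_up {M : Set (Fin n →₀ ℕ)} {q : ℕ} (hq : 0 < q) {b A} (h : Cmb M b A) :
    ∃ b', Cmb {c | fdiv q c ∈ M} b' A ∧ b'.degree = q * b.degree + A.card * (q - 1) := by
  classical
  refine ⟨q • b + Finsupp.equivFunOnFinite.symm (fun i => if i ∈ A then q - 1 else 0),
    ⟨?_, ?_⟩, ?_⟩
  · intro i hi
    have : fdiv q (Finsupp.single i 1 + (q • b + Finsupp.equivFunOnFinite.symm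
        (fun i => if i ∈ A then q - 1 else 0))) = Finsupp.single i 1 + b := by
      ext j
      simp only [fdiv_apply, Finsupp.add_apply, Finsupp.single_apply, Finsupp.smul_apply,
        smul_eq_mul, Finsupp.equivFunOnFinite_symm_apply_apply]
      rw [Nat.div_eq_iff hq, add_mul, mul_comm q]
      by_cases hj : i = j
      · subst hj
        simp [hi]; omega
      · simp only [hj, if_false]
        split_ifs <;> omega
    simp only [Set.mem_ofPred_eq]
    rw [this]
    exact h.1 i hi
  · intro c hc hcM
    refine h.2 (fdiv q c) (fun i hi => by simp [hc i hi]) ?_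
    have : fdiv q (c + (q • b + Finsupp.equivFunOnFinite.symm
        (fun i => if i ∈ A then q - 1 else 0))) = fdiv q c + b := by
      ext j
      simp only [fdiv_apply, Finsupp.add_apply, Finsupp.smul_apply,
        smul_eq_mul, Finsupp.equivFunOnFinite_symm_apply_apply]
      by_cases hj : j ∈ A
      · rw [hc j hj, if_pos hj, Nat.div_eq_iff hq, Nat.zero_div, zero_add, zero_add, mul_comm q]
        omega
      · simp only [hj, if_false, add_zero]
        rw [Nat.add_mul_div_left _ _ hq]
    simpa [this] using hcM
  · rw [Finsupp.degree_eq_sum, Finsupp.degree_eq_sum, Finset.mul_sum]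
    simp [Finset.sum_add_distrib]

theorem vnum_frob (p : ℕ) (hp : p.Prime) [CharP K p] (e : ℕ)
    {I : Ideal (MvPolynomial (Fin n) K)} {M} (hI : MonRep I M) (htop : I ≠ ⊤)
    (hunm : heightI I = bightI I) :
    vnum (frobPow I (p ^ e)) = p ^ e * vnum I + heightI I * (p ^ e - 1) := by
  have hq : 0 < p ^ e := pow_pos hp.pos e
  have hne : {d | ∃ b A, Cmb M b A ∧ b.degree = d}.Nonempty := by
    obtain ⟨b, A, h⟩ := cmb_nonempty hI htop
    exact ⟨_, b, A, h, rfl⟩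
  obtain ⟨b, A, h, hd⟩ := Nat.sInf_mem hne
  rw [← vnum_eq hI] at hd
  obtain ⟨b', h', hd'⟩ := cmb_up hq h
  rw [heights hI hunm h, hd] at hd'
  rw [vnum_eq (frob_rep p hp e hI)]
  apply le_antisymm
  · exact Nat.sInf_le ⟨b', A, h', hd'⟩
  · refine le_csInf ⟨_, b', A, h', rfl⟩ ?_
    rintro _ ⟨c, B, hc, rfl⟩
    obtain ⟨h1, h2⟩ := cmb_down hI.up hq hc
    rw [heights hI hunm h1] at h2
    refine le_trans ?_ h2
    gcongr
    rw [vnum_eq hI]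
    exact Nat.sInf_le ⟨_, B, h1, rfl⟩

theorem stmt14 {K : Type*} [Field K] {n : ℕ} (p : ℕ) (hp : p.Prime) [CharP K p]
    (I : Ideal (MvPolynomial (Fin n) K)) (hmon : IsMonomialIdeal I) (htop : I ≠ ⊤) (hbot : I ≠ ⊥)
    (hunm : heightI I = bightI I) :
    Filter.Tendsto (fun e : ℕ => (vnum (frobPow I (p ^ e)) : ℝ) / (p ^ e : ℝ))
      Filter.atTop (nhds ((vnum I : ℝ) + (heightI I : ℝ))) := by
  obtain ⟨M, hI⟩ := rep_of_mon hmon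
  have hp1 : (1 : ℝ) < p := by exact_mod_cast hp.one_lt
  have hlim : Filter.Tendsto (fun e : ℕ => (vnum I : ℝ) + heightI I * (1 - ((p : ℝ)⁻¹) ^ e))
      Filter.atTop (nhds ((vnum I : ℝ) + heightI I * (1 - 0))) := by
    refine tendsto_const_nhds.add (tendsto_const_nhds.mul (tendsto_const_nhds.sub ?_))
    exact tendsto_pow_atTop_nhds_zero_of_lt_one (by positivity) (inv_lt_one_of_one_lt₀ hp1)
  rw [sub_zero, mul_one] at hlim
  refine hlim.congr fun e => ?_
  rw [vnum_frob p hp e hI htop hunm]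
  have hq : 1 ≤ p ^ e := Nat.one_le_pow _ _ hp.pos
  have hq' : (p : ℝ) ^ e ≠ 0 := by positivity
  push_cast [Nat.cast_sub hq]
  rw [inv_pow]
  field_simp

end
end
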